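/- arXiv:2003.11000 — 2 statements merged into one kernel-verified Lean document; each statement's English description precedes it below -/
import Mathlib

section
/- Let G be a group, k a field, K and H subgroups of G, ψ : K → kˣ and φ : H → kˣ group homomorphisms, and g ∈ G such that K ≤ g⁻¹Hg and ψ(x) = φ(g x g⁻¹) for all x ∈ K. Suppose x_K ∈ stab_G(K,ψ) and x_H ∈ stab_G(H,φ) satisfy the monocentre condition: g x_K g⁻¹ ∈ stab_G(H,φ) and g x_K g⁻¹ ∈ x_H · ker(φ). Then the two k[G]-module homomorphisms k[G] ⊗_{k[K]} k_ψ → k[G] ⊗_{k[H]} k_φ determined on generators by g' ⊗ v ↦ g'(g x_K)⁻¹ ⊗ v and by g' ⊗ v ↦ g'(x_H g)⁻¹ ⊗ v are equal (i.e. the composites [(K,ψ),g,(H,φ)]·[(K,ψ),x_K,(K,ψ)] and [(H,φ),x_H,(H,φ)]·[(K,ψ),g,(H,φ)] coincide). -/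
/-- The stabiliser of the pair `(H, φ)`:
`stab_G(H,φ) = {z ∈ G : zHz⁻¹ = H and φ(zxz⁻¹) = φ(x) for all x ∈ H}`. -/
def stabPair {G : Type*} [Group G] {k : Type*} [Field k] (H : Subgroup G) (φ : H →* kˣ) :
    Set G :=
  {z : G | (∀ x : G, x ∈ H ↔ z * x * z⁻¹ ∈ H) ∧
    ∀ (x : G) (hx : x ∈ H) (hx' : z * x * z⁻¹ ∈ H), φ ⟨z * x * z⁻¹, hx'⟩ = φ ⟨x, hx⟩}

/-- The left `k[G]`-submodule of relations defining the induced module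
`k[G] ⊗_{k[H]} k_φ` as the quotient `k[G]/⟨h - φ(h)·1 : h ∈ H⟩`:
in the quotient, `g' ⊗ v` corresponds to `v·[g']`, and `g'h ⊗ v = φ(h)·(g' ⊗ v)`. -/
noncomputable def monomialRel (k : Type*) [Field k] {G : Type*} [Group G]
    (H : Subgroup G) (φ : H →* kˣ) : Submodule (MonoidAlgebra k G) (MonoidAlgebra k G) :=
  Submodule.span (MonoidAlgebra k G)
    {a | ∃ h : H, a = MonoidAlgebra.of k G (h : G) - ((φ h : kˣ) : k) • 1}

/-- Proposition 3.1: under the monocentre condition, the composites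
`[(K,ψ),g,(H,φ)]·[(K,ψ),x_K,(K,ψ)]` and `[(H,φ),x_H,(H,φ)]·[(K,ψ),g,(H,φ)]`
coincide, i.e. the two `k[G]`-module homomorphisms
`k[G] ⊗_{k[K]} k_ψ → k[G] ⊗_{k[H]} k_φ`, determined on generators by
`g' ⊗ v ↦ g'(g x_K)⁻¹ ⊗ v` and by `g' ⊗ v ↦ g'(x_H g)⁻¹ ⊗ v`, are equal. -/
theorem monocentre_composites_eq
    {G : Type*} [Group G] {k : Type*} [Field k]
    (K H : Subgroup G) (ψ : K →* kˣ) (φ : H →* kˣ) (g : G)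
    (hKH : ∀ x ∈ K, g * x * g⁻¹ ∈ H)
    (hψφ : ∀ (x : G) (hx : x ∈ K), ψ ⟨x, hx⟩ = φ ⟨g * x * g⁻¹, hKH x hx⟩)
    (xK xH : G) (hxK : xK ∈ stabPair K ψ) (hxH : xH ∈ stabPair H φ)
    -- the monocentre condition
    (hmc₁ : g * xK * g⁻¹ ∈ stabPair H φ)
    (hmc₂ : ∃ (w : G) (hw : w ∈ H), φ ⟨w, hw⟩ = 1 ∧ g * xK * g⁻¹ = xH * w)
    -- the two composite `k[G]`-module homomorphisms, given on generators
    (T₁ T₂ : (MonoidAlgebra k G ⧸ monomialRel k K ψ) →ₗ[MonoidAlgebra k G]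
      (MonoidAlgebra k G ⧸ monomialRel k H φ))
    (hT₁ : ∀ g' : G, T₁ (Submodule.Quotient.mk (MonoidAlgebra.of k G g')) =
      Submodule.Quotient.mk (MonoidAlgebra.of k G (g' * (g * xK)⁻¹)))
    (hT₂ : ∀ g' : G, T₂ (Submodule.Quotient.mk (MonoidAlgebra.of k G g')) =
      Submodule.Quotient.mk (MonoidAlgebra.of k G (g' * (xH * g)⁻¹))) :
    T₁ = T₂ := by
  obtain ⟨w, hw, hφw, hgw⟩ := hmc₂
  have hu : xH * w⁻¹ * xH⁻¹ ∈ H := (hxH.1 _).1 (H.inv_mem hw)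
  have hφu : φ ⟨xH * w⁻¹ * xH⁻¹, hu⟩ = 1 := by
    rw [hxH.2 _ (H.inv_mem hw) hu]
    have : (⟨w⁻¹, H.inv_mem hw⟩ : H) = (⟨w, hw⟩ : H)⁻¹ := rfl
    rw [this, map_inv, hφw, inv_one]
  have hg : (g * xK)⁻¹ = (xH * g)⁻¹ * (xH * w⁻¹ * xH⁻¹) := by
    have h : g * xK = xH * w * g := by rw [← hgw]; group
    rw [h]; group
  have key : T₁ (Submodule.Quotient.mk (MonoidAlgebra.of k G 1)) =
      T₂ (Submodule.Quotient.mk (MonoidAlgebra.of k G 1)) := by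
    rw [hT₁, hT₂, one_mul, one_mul, hg, Submodule.Quotient.eq]
    have hmem : MonoidAlgebra.of k G (xH * w⁻¹ * xH⁻¹) - 1 ∈ monomialRel k H φ := by
      apply Submodule.subset_span
      refine ⟨⟨_, hu⟩, ?_⟩
      rw [hφu, Units.val_one, one_smul]
    have h2 := (monomialRel k H φ).smul_mem (MonoidAlgebra.of k G (xH * g)⁻¹) hmem
    rwa [smul_eq_mul, mul_sub, mul_one, ← map_mul] at h2
  apply LinearMap.ext
  intro x
  obtain ⟨a, rfl⟩ := Submodule.Quotient.mk_surjective _ x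
  have ha : (Submodule.Quotient.mk a : MonoidAlgebra k G ⧸ monomialRel k K ψ) =
      a • Submodule.Quotient.mk (MonoidAlgebra.of k G 1) := by
    rw [← Submodule.Quotient.mk_smul, map_one, smul_eq_mul, mul_one]
  rw [ha, map_smul, map_smul, key]
end

section
/- Let k be an algebraically closed field of characteristic zero, R a k-algebra, and E₁ and E₂ simple left R-modules that are finite-dimensional as k-vector spaces. If for every φ ∈ R the trace of the k-linear endomorphism x ↦ φ·x of E₁ equals the trace of the k-linear endomorphism x ↦ φ·x of E₂, then E₁ and E₂ are isomorphic as R-modules. -/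
/-- Let `k` be an algebraically closed field of characteristic zero, `R` a `k`-algebra and
`E₁`, `E₂` simple left `R`-modules which are finite-dimensional over `k`.  If for every
`φ ∈ R` the traces of `x ↦ φ • x` on `E₁` and on `E₂` agree, then `E₁ ≅ E₂` as
`R`-modules. -/
theorem simple_modules_iso_of_trace_eq
    {k : Type*} [Field k] [IsAlgClosed k] [CharZero k]
    {R : Type*} [Ring R] [Algebra k R]
    {E₁ : Type*} [AddCommGroup E₁] [Module R E₁] [Module k E₁]
    [IsScalarTower k R E₁] [SMulCommClass R k E₁]
    {E₂ : Type*} [AddCommGroup E₂] [Module R E₂] [Module k E₂]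
    [IsScalarTower k R E₂] [SMulCommClass R k E₂]
    [IsSimpleModule R E₁] [IsSimpleModule R E₂]
    [FiniteDimensional k E₁] [FiniteDimensional k E₂]
    (htr : ∀ φ : R,
      LinearMap.trace k E₁ (DistribMulAction.toLinearMap k E₁ φ) =
        LinearMap.trace k E₂ (DistribMulAction.toLinearMap k E₂ φ)) :
    Nonempty (E₁ ≃ₗ[R] E₂) := by
  classical
  by_contra hne
  have h12 : ∀ f : E₁ →ₗ[R] E₂, f = 0 := fun f =>
    (LinearMap.bijective_or_eq_zero f).resolve_left
      fun h => hne ⟨LinearEquiv.ofBijective f h⟩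
  have h21 : ∀ f : E₂ →ₗ[R] E₁, f = 0 := fun f =>
    (LinearMap.bijective_or_eq_zero f).resolve_left
      fun h => hne ⟨(LinearEquiv.ofBijective f h).symm⟩
  let p : Module.End (Module.End R (E₁ × E₂)) (E₁ × E₂) :=
    { toFun := fun m => (m.1, 0)
      map_add' := fun x y => by simp
      map_smul' := fun g m => by
        have e1 : (g (0, m.2)).1 = 0 :=
          LinearMap.congr_fun (h21 (LinearMap.fst R E₁ E₂ ∘ₗ g ∘ₗ LinearMap.inr R E₁ E₂)) m.2
        have e2 : (g (m.1, 0)).2 = 0 :=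
          LinearMap.congr_fun (h12 (LinearMap.snd R E₁ E₂ ∘ₗ g ∘ₗ LinearMap.inl R E₁ E₂)) m.1
        have e3 : g m = g (m.1, 0) + g (0, m.2) := by
          rw [← map_add]; simp
        ext
        · simp [e3, e1]
        · simp [e2] }
  have hss : IsSemisimpleModule R (E₁ × E₂) := by
    have i1 : IsSemisimpleModule R (LinearMap.range (LinearMap.inl R E₁ E₂)) :=
      .range _
    have i2 : IsSemisimpleModule R (LinearMap.range (LinearMap.inr R E₁ E₂)) :=
      .range _
    refine isSemisimpleModule_of_isSemisimpleModule_submodule'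
      (p := fun b : Bool => if b then LinearMap.range (LinearMap.inl R E₁ E₂)
        else LinearMap.range (LinearMap.inr R E₁ E₂)) ?_ ?_
    · rintro (_ | _)
      · simpa using i2
      · simpa using i1
    · rw [iSup_bool_eq]
      simpa using LinearMap.sup_range_inl_inr (R := R) (M := E₁) (M₂ := E₂)
  let b₁ := Module.finBasis k E₁
  let b₂ := Module.finBasis k E₂
  obtain ⟨r, hr⟩ := jacobson_density (R := R) p
    (Finset.univ.image (fun i => (b₁ i, (0 : E₂))) ∪
      Finset.univ.image (fun i => ((0 : E₁), b₂ i)))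
  have t1 : DistribMulAction.toLinearMap k E₁ r = LinearMap.id := by
    refine b₁.ext fun i => ?_
    have := congrArg Prod.fst (hr (b₁ i, 0) (by simp))
    exact this.symm
  have t2 : DistribMulAction.toLinearMap k E₂ r = 0 := by
    refine b₂.ext fun i => ?_
    have := congrArg Prod.snd (hr (0, b₂ i) (by simp))
    exact this.symm
  have h := htr r
  rw [t1, t2, LinearMap.trace_id, map_zero] at h
  have : Nontrivial E₁ := IsSimpleModule.nontrivial R E₁
  exact (Module.finrank_pos (R := k) (M := E₁)).ne' (by exact_mod_cast h)
end
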